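/- arXiv:2303.04840 — 2 statements merged into one kernel-verified Lean document; each statement's English description precedes it below -/
import Mathlib

section
/- Let N_S and N_S* be natural numbers with N_S ≥ 1 and N_S* ≥ 1, and let T be a real number with T ≥ 2·N_S + 2. Then (1 − (N_S + 1)/T) · min( N_S + 1, N_S + N_S*·N_S/(T − 1 − N_S) ) ≥ N_S·(1 − N_S/T). Moreover, if N_S* ≥ 2 the inequality is strict. -/
/-!
Distributing the pre-log factor `1 - (N + r) / T` over the minimum turns the first branch into the
pilot-based degrees of freedom of `N + r` antennas and the second into those of `N` antennas plus
`(s - r) * N / T`. Since `n * (1 - n / T)` is a parabola symmetric about `n = T / 2`, passing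
from `N` to `N + r` antennas does not lower it as long as `2 * N + r ≤ T`.
-/

section

variable {K : Type*} [Field K]

/-- Degrees of freedom of a pilot-based link with `n` transmit antennas over coherence time `T`:
`n` of the `T` slots carry pilots and the others carry `n` symbols each. The number `n` may be any
field element. -/
def pilotDoF (T n : K) : K :=
  n * (1 - n / T)

/-- Degrees of freedom of product-superposition relaying over coherence time `T` with `N` source
antennas, `r` active relay antennas, and `s` standing for `N_S*`. For `r = 1` this is the
expression compared with the direct link. The antenna numbers may be any field elements. -/
def productSuperpositionDoF [LinearOrder K] (T N r s : K) : K :=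
  (1 - (N + r) / T) * min (N + r) (N + s * N / (T - r - N))

theorem pilotDoF_sub_pilotDoF (T m n : K) :
    pilotDoF T n - pilotDoF T m = (n - m) * (1 - (m + n) / T) := by
  unfold pilotDoF
  ring

theorem one_sub_div_mul_add_div {T N r : K} (s : K) (hT : T ≠ 0) (hD : T - r - N ≠ 0) :
    (1 - (N + r) / T) * (N + s * N / (T - r - N)) = pilotDoF T N + (s - r) * N / T := by
  unfold pilotDoF
  field_simp
  ring

variable [LinearOrder K] [IsStrictOrderedRing K] {T m n N r s : K}

theorem pilotDoF_le_pilotDoF (hT : 0 < T) (hmn : m ≤ n) (hadd : m + n ≤ T) :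
    pilotDoF T m ≤ pilotDoF T n := by
  rw [← sub_nonneg, pilotDoF_sub_pilotDoF]
  exact mul_nonneg (sub_nonneg.2 hmn) (sub_nonneg.2 ((div_le_one hT).2 hadd))

theorem pilotDoF_lt_pilotDoF (hT : 0 < T) (hmn : m < n) (hadd : m + n < T) :
    pilotDoF T m < pilotDoF T n := by
  rw [← sub_pos, pilotDoF_sub_pilotDoF]
  exact mul_pos (sub_pos.2 hmn) (sub_pos.2 ((div_lt_one hT).2 hadd))

theorem productSuperpositionDoF_eq_min (hT : 0 < T) (hNr : N + r < T) :
    productSuperpositionDoF T N r s =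
      min (pilotDoF T (N + r)) (pilotDoF T N + (s - r) * N / T) := by
  have prelog_nonneg : 0 ≤ 1 - (N + r) / T := sub_nonneg.2 ((div_le_one hT).2 hNr.le)
  have slots_pos : 0 < T - r - N := by linarith
  rw [productSuperpositionDoF, mul_min_of_nonneg _ _ prelog_nonneg,
    one_sub_div_mul_add_div s hT.ne' slots_pos.ne', mul_comm, ← pilotDoF]

theorem product_superposition_beats_direct_link_general
    (hN : 0 < N) (hr : 0 < r) (hrs : r ≤ s) (hT : 2 * N + r ≤ T) :
    pilotDoF T N ≤ productSuperpositionDoF T N r s ∧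
      (r < s → 2 * N + r < T → pilotDoF T N < productSuperpositionDoF T N r s) := by
  have T_pos : 0 < T := by linarith
  rw [productSuperpositionDoF_eq_min T_pos (by linarith)]
  refine ⟨le_min ?_ ?_, fun hrs' hT' => lt_min ?_ ?_⟩
  · exact pilotDoF_le_pilotDoF T_pos (by linarith) (by linarith)
  · exact le_add_of_nonneg_right (div_nonneg (mul_nonneg (sub_nonneg.2 hrs) hN.le) T_pos.le)
  · exact pilotDoF_lt_pilotDoF T_pos (by linarith) (by linarith)
  · exact lt_add_of_pos_right _ (div_pos (mul_pos (sub_pos.2 hrs') hN) T_pos)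

end

/-- With one active relay antenna, the product-superposition scheme achieves at
least the direct-link degrees of freedom `N_S·(1 − N_S/T)`, strictly more when
`N_S* ≥ 2`. -/
theorem product_superposition_beats_direct_link
    (N_S NSstar : ℕ) (hNS : 1 ≤ N_S) (hNSstar : 1 ≤ NSstar)
    (T : ℝ) (hT : 2 * (N_S : ℝ) + 2 ≤ T) :
    (1 - ((N_S : ℝ) + 1) / T) *
        min ((N_S : ℝ) + 1)
          ((N_S : ℝ) + (NSstar : ℝ) * (N_S : ℝ) / (T - 1 - (N_S : ℝ)))
      ≥ (N_S : ℝ) * (1 - (N_S : ℝ) / T)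
    ∧ (2 ≤ NSstar →
      (1 - ((N_S : ℝ) + 1) / T) *
          min ((N_S : ℝ) + 1)
            ((N_S : ℝ) + (NSstar : ℝ) * (N_S : ℝ) / (T - 1 - (N_S : ℝ)))
        > (N_S : ℝ) * (1 - (N_S : ℝ) / T)) := by
  have general := product_superposition_beats_direct_link_general (N := (N_S : ℝ))
    (s := NSstar) (T := T) (Nat.cast_pos.2 hNS) one_pos (Nat.one_le_cast.2 hNSstar) (by linarith)
  exact ⟨general.1, fun h => general.2 (Nat.one_lt_cast.2 h) (by linarith)⟩
end

section
/- Let N_S, N_S*, n_r be natural numbers and T a real number with T > N_S + n_r. For a positive integer K define g(K) = (1 − (N_S + n_r)/T) · min( (N_S + n_r)·(1 + (K − 1)·n_r/(K·(T − n_r − N_S))), N_S·(1 + (K·N_S* + (K − 1)·n_r)/(K·(T − n_r − N_S))) ). Then g is nondecreasing: for all positive integers K ≤ K', g(K) ≤ g(K'). -/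
/-! Since `(K - 1) / K = 1 - K⁻¹` increases for `K > 0`, so do both quotients inside the minimum,
which are `(K c + (K - 1) n_r) / (K d)` with `c = 0` and `c = N_S*`. Nonnegative scaling and minima
preserve monotonicity, and the prefactor `1 - (N_S + n_r) / T` is nonnegative. -/

open Set

variable {𝕜 : Type*} [Field 𝕜]

theorem mul_add_sub_one_mul_div_mul {x : 𝕜} (hx : x ≠ 0) (c n d : 𝕜) :
    (x * c + (x - 1) * n) / (x * d) = (c + (1 - x⁻¹) * n) / d := by
  have numerator_eq : x * c + (x - 1) * n = x * (c + (1 - x⁻¹) * n) := by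
    field_simp
  rw [numerator_eq, mul_div_mul_left _ _ hx]

variable [LinearOrder 𝕜]

/-- The achievable degrees of freedom of the relay scheme of Theorem 1 when `T_RD = K * T`,
where `T = T_SD` and `NSstar` is `N_S*`. Antenna numbers and the coherence-time ratio `K` may be
arbitrary scalars. The intended domain is `0 ≤ N_S`, `0 ≤ n_r`, `N_S + n_r < T` and `0 < K`,
where no denominator is zero. -/
def achievableDoF (N_S NSstar n_r T K : 𝕜) : 𝕜 :=
  (1 - (N_S + n_r) / T) *
    min ((N_S + n_r) * (1 + (K - 1) * n_r / (K * (T - n_r - N_S))))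
      (N_S * (1 + (K * NSstar + (K - 1) * n_r) / (K * (T - n_r - N_S))))

variable [IsStrictOrderedRing 𝕜]

theorem monotoneOn_mul_add_sub_one_mul_div_mul (c : 𝕜) {n d : 𝕜} (hn : 0 ≤ n) (hd : 0 < d) :
    MonotoneOn (fun x ↦ (x * c + (x - 1) * n) / (x * d)) (Ioi 0) := by
  intro x (hx : 0 < x) y (hy : 0 < y) hxy
  calc (x * c + (x - 1) * n) / (x * d)
      = (c + (1 - x⁻¹) * n) / d := mul_add_sub_one_mul_div_mul hx.ne' c n d
    _ ≤ (c + (1 - y⁻¹) * n) / d := by gcongr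
    _ = (y * c + (y - 1) * n) / (y * d) := (mul_add_sub_one_mul_div_mul hy.ne' c n d).symm

theorem dof_monotone_in_K_general {N_S n_r T : 𝕜} (NSstar : 𝕜)
    (hN_S : 0 ≤ N_S) (hn_r : 0 ≤ n_r) (hT : N_S + n_r < T) :
    MonotoneOn (achievableDoF N_S NSstar n_r T) (Ioi 0) := by
  have hT_pos : 0 < T := (add_nonneg hN_S hn_r).trans_lt hT
  have prefactor_nonneg : 0 ≤ 1 - (N_S + n_r) / T :=
    sub_nonneg.2 ((div_le_one hT_pos).2 hT.le)
  have hd : 0 < T - n_r - N_S := by linarith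
  have first_quotient : MonotoneOn (fun K ↦ (K - 1) * n_r / (K * (T - n_r - N_S))) (Ioi 0) := by
    simpa only [mul_zero, zero_add] using monotoneOn_mul_add_sub_one_mul_div_mul 0 hn_r hd
  have second_quotient := monotoneOn_mul_add_sub_one_mul_div_mul NSstar hn_r hd
  intro K hK K' hK' hKK'
  unfold achievableDoF
  gcongr _ * min (_ * (1 + ?_)) (_ * (1 + ?_))
  · exact first_quotient hK hK' hKK'
  · exact second_quotient hK hK' hKK'

/-- The achievable degrees-of-freedom expression of Theorem 1 for
`T_RD = K·T_SD` is nondecreasing in the coherence-time ratio `K` over the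
positive integers. -/
theorem dof_monotone_in_K
    (N_S NSstar n_r : ℕ) (T : ℝ) (hT : (N_S : ℝ) + (n_r : ℝ) < T)
    (g : ℕ → ℝ)
    (hg : ∀ K : ℕ, g K =
      (1 - ((N_S : ℝ) + (n_r : ℝ)) / T) *
        min
          (((N_S : ℝ) + (n_r : ℝ)) *
            (1 + ((K : ℝ) - 1) * (n_r : ℝ)
              / ((K : ℝ) * (T - (n_r : ℝ) - (N_S : ℝ)))))
          ((N_S : ℝ) *
            (1 + ((K : ℝ) * (NSstar : ℝ) + ((K : ℝ) - 1) * (n_r : ℝ))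
              / ((K : ℝ) * (T - (n_r : ℝ) - (N_S : ℝ)))))) :
    ∀ K K' : ℕ, 1 ≤ K → K ≤ K' → g K ≤ g K' := by
  intro K K' hK hKK'
  have hK_pos : (0 : ℝ) < K := Nat.cast_pos.2 hK
  have hKK'_cast : (K : ℝ) ≤ K' := Nat.cast_le.2 hKK'
  rw [hg K, hg K']
  exact dof_monotone_in_K_general (NSstar : ℝ) N_S.cast_nonneg n_r.cast_nonneg hT
    hK_pos (hK_pos.trans_le hKK'_cast) hKK'_cast
end
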